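/- Under the permutation null distribution, for n ≥ 6 and 1 ≤ t ≤ n−1, the third moment of the between-group edge count satisfies E[R_G(t)³] = p1(t)|G| + (3/2)p1(t)·Σ_i |G_i|(|G_i|−1) + 3p2(t)·(|G|(|G|−1) + (1/2)Σ_i |G_i|(|G_i|−1)(|G|−|G_i|)) − 3p2(t)·(Σ_i |G_i|(|G_i|−1) + Σ_{(i,j)∈G} (|G_i|−1)(|G_j|−1)) + p3(t)·Σ_i |G_i|(|G_i|−1)(|G_i|−2) + p4(t)·(|G|(|G|−1)(|G|−2) + 6·Σ_{(i,j)∈G} (|G_i|−1)(|G_j|−1)) − 2p4(t)·Σ_{(i,j)∈G} |{k : (i,k) ∈ G and (j,k) ∈ G}| − p4(t)·Σ_i |G_i|(|G_i|−1)(3|G|−2|G_i|−2), where p3(t) = t(n−t)((n−t−1)(n−t−2)+(t−1)(t−2))/(n(n−1)(n−2)(n−3)) and p4(t) = 8t(t−1)(t−2)(n−t)(n−t−1)(n−t−2)/(n(n−1)(n−2)(n−3)(n−4)(n−5)). -/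

import Mathlib

open Finset Filter Asymptotics MeasureTheory Topology ProbabilityTheory

namespace GraphCP

noncomputable def edgeFS {n : ℕ} (G : SimpleGraph (Fin n)) : Finset (Sym2 (Fin n)) :=
  letI : DecidableRel G.Adj := Classical.decRel _
  G.edgeFinset

noncomputable def deg {n : ℕ} (G : SimpleGraph (Fin n)) (i : Fin n) : ℕ :=
  letI : DecidableRel G.Adj := Classical.decRel _
  G.degree i

/-- Indicator that the two endpoints of an edge lie in different groups. -/
def crossInd {n : ℕ} (g : Fin n → Bool) : Sym2 (Fin n) → ℝ :=
  Sym2.lift ⟨fun i j => if g i ≠ g j then 1 else 0, by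
    intro i j
    by_cases h : g i = g j <;> simp [h, Ne, eq_comm]⟩

/-- `g_i(t) = 1{π(i) > t}`, where the label of `i` is `π(i) = (f i).val + 1 ∈ {1,…,n}`. -/
def gOne (n t : ℕ) (f : Fin n → Fin n) (i : Fin n) : Bool :=
  decide (t < (f i : ℕ) + 1)

/-- `g_i(t₁,t₂) = 1{t₁ < π(i) ≤ t₂}`. -/
def gTwo (n t₁ t₂ : ℕ) (f : Fin n → Fin n) (i : Fin n) : Bool :=
  decide (t₁ < (f i : ℕ) + 1 ∧ (f i : ℕ) + 1 ≤ t₂)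

noncomputable def RoneF {n : ℕ} (G : SimpleGraph (Fin n)) (t : ℕ) (f : Fin n → Fin n) : ℝ :=
  ∑ e ∈ edgeFS G, crossInd (gOne n t f) e

noncomputable def Rone {n : ℕ} (G : SimpleGraph (Fin n)) (t : ℕ) (π : Equiv.Perm (Fin n)) : ℝ :=
  RoneF G t ⇑π

noncomputable def Rtwo {n : ℕ} (G : SimpleGraph (Fin n)) (t₁ t₂ : ℕ)
    (π : Equiv.Perm (Fin n)) : ℝ :=
  ∑ e ∈ edgeFS G, crossInd (gTwo n t₁ t₂ ⇑π) e

noncomputable def permExp (n : ℕ) (X : Equiv.Perm (Fin n) → ℝ) : ℝ :=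
  (∑ π : Equiv.Perm (Fin n), X π) / (Nat.factorial n : ℝ)

noncomputable def permVar (n : ℕ) (X : Equiv.Perm (Fin n) → ℝ) : ℝ :=
  permExp n (fun π => (X π - permExp n X) ^ 2)

noncomputable def permCov (n : ℕ) (X Y : Equiv.Perm (Fin n) → ℝ) : ℝ :=
  permExp n (fun π => (X π - permExp n X) * (Y π - permExp n Y))

noncomputable def p1 (n t : ℕ) : ℝ := 2 * t * ((n : ℝ) - t) / ((n : ℝ) * ((n : ℝ) - 1))

noncomputable def p2 (n t : ℕ) : ℝ :=
  4 * t * ((t : ℝ) - 1) * ((n : ℝ) - t) * ((n : ℝ) - t - 1) /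
    ((n : ℝ) * ((n : ℝ) - 1) * ((n : ℝ) - 2) * ((n : ℝ) - 3))

noncomputable def numEdges {n : ℕ} (G : SimpleGraph (Fin n)) : ℝ := ((edgeFS G).card : ℝ)

noncomputable def degSq {n : ℕ} (G : SimpleGraph (Fin n)) : ℝ :=
  ∑ i : Fin n, (deg G i : ℝ) ^ 2

noncomputable def Zone {n : ℕ} (G : SimpleGraph (Fin n)) (t : ℕ) (π : Equiv.Perm (Fin n)) : ℝ :=
  -(Rone G t π - permExp n (Rone G t)) / Real.sqrt (permVar n (Rone G t))

noncomputable def Ztwo {n : ℕ} (G : SimpleGraph (Fin n)) (t₁ t₂ : ℕ)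
    (π : Equiv.Perm (Fin n)) : ℝ :=
  -(Rtwo G t₁ t₂ π - permExp n (Rtwo G t₁ t₂)) / Real.sqrt (permVar n (Rtwo G t₁ t₂))


noncomputable def p3 (n t : ℕ) : ℝ :=
  t * ((n : ℝ) - t) * (((n : ℝ) - t - 1) * ((n : ℝ) - t - 2) + ((t : ℝ) - 1) * ((t : ℝ) - 2)) /
    ((n : ℝ) * ((n : ℝ) - 1) * ((n : ℝ) - 2) * ((n : ℝ) - 3))

noncomputable def p4 (n t : ℕ) : ℝ :=
  8 * t * ((t : ℝ) - 1) * ((t : ℝ) - 2) * ((n : ℝ) - t) * ((n : ℝ) - t - 1) * ((n : ℝ) - t - 2) /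
    ((n : ℝ) * ((n : ℝ) - 1) * ((n : ℝ) - 2) * ((n : ℝ) - 3) * ((n : ℝ) - 4) * ((n : ℝ) - 5))

/-- `Σ_{(i,j)∈G} (|Gᵢ|−1)(|Gⱼ|−1)`, summed over the edges of `G`. -/
noncomputable def edgeDegProd {n : ℕ} (G : SimpleGraph (Fin n)) : ℝ :=
  ∑ e ∈ edgeFS G,
    Sym2.lift ⟨fun i j => ((deg G i : ℝ) - 1) * ((deg G j : ℝ) - 1), fun i j => by ring⟩ e

noncomputable def nbrFS {n : ℕ} (G : SimpleGraph (Fin n)) (i : Fin n) : Finset (Fin n) :=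
  letI : DecidableRel G.Adj := Classical.decRel _
  G.neighborFinset i

/-- `Σ_{(i,j)∈G} |{k : (i,k) ∈ G and (j,k) ∈ G}|`, the number of common neighbours summed
over the edges of `G`. -/
noncomputable def edgeCommonNbr {n : ℕ} (G : SimpleGraph (Fin n)) : ℝ :=
  ∑ e ∈ edgeFS G,
    Sym2.lift ⟨fun i j => ((nbrFS G i ∩ nbrFS G j).card : ℝ),
      fun i j => by simp only []; rw [Finset.inter_comm]⟩ e


def ys (n t : ℕ) (u : Fin n) : ℝ := if t < (u : ℕ) + 1 then -1 else 1

noncomputable def eS (n t : ℕ) (S : Finset (Fin n)) : ℝ :=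
  permExp n (fun π => ∏ v ∈ S, ys n t (π v))

lemma ys_sq (n t : ℕ) (u : Fin n) : ys n t u * ys n t u = 1 := by
  unfold ys; split_ifs <;> norm_num

lemma prod_symm {n : ℕ} (x : Fin n → ℝ) (hx : ∀ i, x i * x i = 1) (S T : Finset (Fin n)) :
    (∏ v ∈ S, x v) * ∏ v ∈ T, x v = ∏ v ∈ symmDiff S T, x v := by
  have key : ∀ S : Finset (Fin n), ∏ v ∈ S, x v = ∏ v, if v ∈ S then x v else 1 := by
    intro S; rw [Finset.prod_ite_mem, Finset.univ_inter]
  rw [key, key, key, ← Finset.prod_mul_distrib]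
  refine Finset.prod_congr rfl fun v _ => ?_
  by_cases h1 : v ∈ S <;> by_cases h2 : v ∈ T <;> simp [Finset.mem_symmDiff, h1, h2, hx]

lemma eS_perm (n t : ℕ) (S : Finset (Fin n)) (σ : Equiv.Perm (Fin n)) :
    eS n t (S.map σ.toEmbedding) = eS n t S := by
  unfold eS permExp
  congr 1
  refine Fintype.sum_equiv (Equiv.mulRight σ) _ _ fun π => ?_
  simp [Finset.prod_map]

lemma eS_card (n t : ℕ) (S T : Finset (Fin n)) (h : S.card = T.card) :
    eS n t S = eS n t T := by
  classical
  have e : {x // x ∈ S} ≃ {x // x ∈ T} := Fintype.equivOfCardEq (by simpa using h)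
  have hT : S.map (e.extendSubtype).toEmbedding = T := by
    apply Finset.eq_of_subset_of_card_le
    · intro v hv
      simp only [Finset.mem_map, Equiv.coe_toEmbedding] at hv
      obtain ⟨a, ha, rfl⟩ := hv
      exact e.extendSubtype_mem a ha
    · simp [h]
  rw [← hT, eS_perm]

lemma sum_ys (n t : ℕ) (h : t ≤ n) : ∑ u : Fin n, ys n t u = 2 * (t : ℝ) - n := by
  unfold ys
  rw [Fin.sum_univ_eq_sum_range (fun u : ℕ => if t < u + 1 then (-1 : ℝ) else 1) n]
  obtain ⟨k, rfl⟩ := Nat.exists_eq_add_of_le h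
  rw [Finset.sum_range_add]
  rw [Finset.sum_congr rfl (g := fun _ => (1 : ℝ)), Finset.sum_congr (s₁ := range k) rfl (g := fun _ => (-1 : ℝ))]
  · simp; ring
  · intro x _; simp; 
  · intro x hx; simp at hx; rw [if_neg (by omega)]

lemma eS_rec (n t : ℕ) (h : t ≤ n) (S : Finset (Fin n)) :
    ∑ v, eS n t (symmDiff S {v}) = (2 * (t : ℝ) - n) * eS n t S := by
  unfold eS permExp
  rw [← Finset.sum_div, Finset.sum_comm, ← mul_div_assoc, Finset.mul_sum]
  congr 1
  refine Finset.sum_congr rfl fun π _ => ?_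
  rw [← sum_ys n t h, ← Equiv.sum_comp π (ys n t), Finset.sum_mul]
  refine Finset.sum_congr rfl fun v _ => ?_
  rw [← prod_symm (fun v => ys n t (π v)) (fun i => ys_sq n t _) S {v}]
  simp [mul_comm]

lemma exists_eK (n t : ℕ) : ∃ e : ℕ → ℝ, ∀ S, eS n t S = e S.card := by
  classical
  refine ⟨fun k => if h : ∃ S : Finset (Fin n), S.card = k then eS n t h.choose else 0, fun S => ?_⟩
  have h : ∃ S' : Finset (Fin n), S'.card = S.card := ⟨S, rfl⟩
  simp only [h, dite_true]
  exact eS_card _ _ _ _ h.choose_spec.symm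

lemma eK_rec (n t : ℕ) (h : t ≤ n) (e : ℕ → ℝ) (he : ∀ S, eS n t S = e S.card)
    (k : ℕ) (hk : k ≤ n) :
    ((n : ℝ) - k) * e (k + 1) + k * e (k - 1) = (2 * (t : ℝ) - n) * e k := by
  obtain ⟨S, -, hS⟩ := Finset.exists_subset_card_eq (s := (univ : Finset (Fin n))) (n := k) (by simpa using hk)
  have h1 := eS_rec n t h S
  simp only [he] at h1
  rw [hS] at h1
  rw [← h1, ← Finset.sum_add_sum_compl S]
  rw [Finset.sum_congr rfl (g := fun _ => e (k - 1)), Finset.sum_congr (s₁ := Sᶜ) rfl (g := fun _ => e (k + 1))]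
  · simp [Finset.card_compl, hS, Nat.cast_sub hk]; ring
  · intro v hv
    simp at hv
    congr 1
    have : symmDiff S {v} = insert v S := by
      ext w; by_cases hw : w = v <;> simp [Finset.mem_symmDiff, hw, hv]
    rw [this, Finset.card_insert_of_notMem hv, hS]
  · intro v hv
    congr 1
    have : symmDiff S {v} = S.erase v := by
      ext w; by_cases hw : w = v <;> simp [Finset.mem_symmDiff, hw, hv]
    rw [this, Finset.card_erase_of_mem hv, hS]

lemma eK_zero (n t : ℕ) (e : ℕ → ℝ) (he : ∀ S, eS n t S = e S.card) : e 0 = 1 := by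
  have := he ∅
  rw [Finset.card_empty] at this
  rw [← this]
  have h : (n.factorial : ℝ) ≠ 0 := by positivity
  simp [eS, permExp, Fintype.card_perm, h]

/-- number of common endpoints -/
def cc {n : ℕ} (e f : Sym2 (Fin n)) : ℕ := (e.toFinset ∩ f.toFinset).card
def ct {n : ℕ} (e f g : Sym2 (Fin n)) : ℕ := (e.toFinset ∩ f.toFinset ∩ g.toFinset).card

lemma card_symm2 {n : ℕ} (A B : Finset (Fin n)) :
    ((symmDiff A B).card : ℤ) = A.card + B.card - 2 * (A ∩ B).card := by
  have h1 : (symmDiff A B).card = (A \ B).card + (B \ A).card := by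
    rw [symmDiff_def, Finset.sup_eq_union, Finset.card_union_of_disjoint]
    exact disjoint_sdiff_sdiff
  have h2 := Finset.card_sdiff_add_card_inter A B
  have h3 := Finset.card_sdiff_add_card_inter B A
  rw [Finset.inter_comm] at h3
  omega

lemma card_symm3 {n : ℕ} (A B C : Finset (Fin n)) :
    ((symmDiff (symmDiff A B) C).card : ℤ) = A.card + B.card + C.card
      - 2 * ((A ∩ B).card + (A ∩ C).card + (B ∩ C).card) + 4 * (A ∩ B ∩ C).card := by
  rw [card_symm2, card_symm2]
  have : symmDiff A B ∩ C = symmDiff (A ∩ C) (B ∩ C) := by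
    ext v; simp only [Finset.mem_inter, Finset.mem_symmDiff]; tauto
  rw [this, card_symm2]
  have : A ∩ C ∩ (B ∩ C) = A ∩ B ∩ C := by ext v; simp only [Finset.mem_inter]; tauto
  rw [this]; ring

lemma inter_bound {n : ℕ} (A B C : Finset (Fin n)) :
    (A ∩ B).card + (A ∩ C).card ≤ A.card + (A ∩ B ∩ C).card := by
  have h := Finset.card_union_add_card_inter (A ∩ B) (A ∩ C)
  have h2 : (A ∩ B) ∩ (A ∩ C) = A ∩ B ∩ C := by ext v; simp only [Finset.mem_inter]; tauto
  rw [h2] at h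
  have h3 : ((A ∩ B) ∪ (A ∩ C)).card ≤ A.card := by
    apply Finset.card_le_card; intro v; simp only [Finset.mem_union, Finset.mem_inter]; tauto
  omega

lemma cc_eq_two {n : ℕ} (e f : Sym2 (Fin n)) (he : ¬ e.IsDiag) (hf : ¬ f.IsDiag) :
    cc e f = 2 ↔ e = f := by
  have h1 := Sym2.card_toFinset_of_not_isDiag e he
  have h2 := Sym2.card_toFinset_of_not_isDiag f hf
  unfold cc
  constructor
  · intro h
    have h3 : e.toFinset ∩ f.toFinset = e.toFinset :=
      Finset.eq_of_subset_of_card_le Finset.inter_subset_left (by omega)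
    have h4 : e.toFinset ∩ f.toFinset = f.toFinset :=
      Finset.eq_of_subset_of_card_le Finset.inter_subset_right (by omega)
    have h5 := h3.symm.trans h4
    apply Sym2.ext
    intro x
    rw [← Sym2.mem_toFinset, h5, Sym2.mem_toFinset]
  · rintro rfl; simpa using h1

def sI {n : ℕ} (e f : Sym2 (Fin n)) : ℝ := if e = f then 1 else 0

lemma pair_formula {n : ℕ} (E : ℕ → ℝ) (h0 : E 0 = 1) (e f : Sym2 (Fin n))
    (he : ¬ e.IsDiag) (hf : ¬ f.IsDiag) :
    E (symmDiff e.toFinset f.toFinset).card =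
      E 4 + (E 2 - E 4) * cc e f + (1 - 2 * E 2 + E 4) * sI e f := by
  have h1 := Sym2.card_toFinset_of_not_isDiag e he
  have h2 := Sym2.card_toFinset_of_not_isDiag f hf
  have h3 := card_symm2 e.toFinset f.toFinset
  have h4 := cc_eq_two e f he hf
  have h5 : cc e f ≤ 2 := by
    unfold cc; rw [← h1]; exact Finset.card_le_card Finset.inter_subset_left
  unfold sI
  simp only [← h4]
  change _ = _ - 2 * (cc e f : ℤ) at h3
  generalize (symmDiff e.toFinset f.toFinset).card = k at *
  generalize cc e f = c at *
  rw [h1, h2] at h3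
  interval_cases c
  · obtain rfl : k = 4 := by omega
    norm_num
  · obtain rfl : k = 2 := by omega
    norm_num
  · obtain rfl : k = 0 := by omega
    norm_num [h0]; ring

lemma triple_formula {n : ℕ} (E : ℕ → ℝ) (h0 : E 0 = 1) (e f g : Sym2 (Fin n))
    (he : ¬ e.IsDiag) (hf : ¬ f.IsDiag) (hg : ¬ g.IsDiag) :
    E (symmDiff (symmDiff e.toFinset f.toFinset) g.toFinset).card =
      E 6 + (E 4 - E 6) * ((cc e f : ℝ) + cc e g + cc f g)
      + (E 2 - 2 * E 4 + E 6) * (sI e f + sI e g + sI f g)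
      + (E 4 - 1) * ct e f g
      + (E 2 - 2 * E 4 + E 6) * ((cc e f : ℝ) * cc e g + cc e f * cc f g + cc e g * cc f g)
      + (1 - 3 * E 2 + 3 * E 4 - E 6) * ((cc e f : ℝ) * cc e g * cc f g)
      + (E 2 - (E 6 + 4 * (E 4 - E 6) + 6 * (E 2 - 2 * E 4 + E 6) + (E 4 - 1)
          + 2 * (1 - 3 * E 2 + 3 * E 4 - E 6)))
          * (sI e f * cc e g + sI e g * cc e f + sI f g * cc e f)
      + (E 2 - (E 6 + 6 * (E 4 - E 6) + 15 * (E 2 - 2 * E 4 + E 6) + 2 * (E 4 - 1)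
          + 8 * (1 - 3 * E 2 + 3 * E 4 - E 6)
          + 6 * (E 2 - (E 6 + 4 * (E 4 - E 6) + 6 * (E 2 - 2 * E 4 + E 6) + (E 4 - 1)
          + 2 * (1 - 3 * E 2 + 3 * E 4 - E 6))))) * (sI e f * sI f g) := by
  have h1 := Sym2.card_toFinset_of_not_isDiag e he
  have h2 := Sym2.card_toFinset_of_not_isDiag f hf
  have h2' := Sym2.card_toFinset_of_not_isDiag g hg
  have h3 := card_symm3 e.toFinset f.toFinset g.toFinset
  have h4 := cc_eq_two e f he hf
  have h4' := cc_eq_two e g he hg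
  have h4'' := cc_eq_two f g hf hg
  have hle : ∀ A B : Finset (Fin n), (A ∩ B).card ≤ A.card :=
    fun A B => Finset.card_le_card Finset.inter_subset_left
  have h5 : cc e f ≤ 2 := by rw [← h1]; exact hle _ _
  have h6 : cc e g ≤ 2 := by rw [← h1]; exact hle _ _
  have h7 : cc f g ≤ 2 := by rw [← h2]; exact hle _ _
  have t1 : ct e f g ≤ cc e f := hle _ _
  have t2 : ct e f g ≤ cc e g := by
    apply Finset.card_le_card; intro v; simp only [Finset.mem_inter]; tauto
  have t3 : ct e f g ≤ cc f g := by
    apply Finset.card_le_card; intro v; simp only [Finset.mem_inter]; tauto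
  have b1 := inter_bound e.toFinset f.toFinset g.toFinset
  have b2 := inter_bound f.toFinset e.toFinset g.toFinset
  have b3 := inter_bound g.toFinset e.toFinset f.toFinset
  have i1 : f.toFinset ∩ e.toFinset ∩ g.toFinset = e.toFinset ∩ f.toFinset ∩ g.toFinset := by
    ext v; simp only [Finset.mem_inter]; tauto
  have i2 : g.toFinset ∩ e.toFinset ∩ f.toFinset = e.toFinset ∩ f.toFinset ∩ g.toFinset := by
    ext v; simp only [Finset.mem_inter]; tauto
  rw [i1, Finset.inter_comm f.toFinset e.toFinset] at b2
  rw [i2, Finset.inter_comm g.toFinset e.toFinset, Finset.inter_comm g.toFinset f.toFinset] at b3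
  rw [h1] at b1
  rw [h2] at b2
  rw [h2'] at b3
  rw [h1, h2, h2'] at h3
  change cc e f + cc e g ≤ 2 + ct e f g at b1
  change cc e f + cc f g ≤ 2 + ct e f g at b2
  change cc e g + cc f g ≤ 2 + ct e f g at b3
  change _ = _ - 2 * ((cc e f : ℤ) + cc e g + cc f g) + 4 * (ct e f g : ℤ) at h3
  unfold sI
  simp only [← h4, ← h4', ← h4'']
  clear h4 h4' h4'' i1 i2 hle
  generalize (symmDiff (symmDiff e.toFinset f.toFinset) g.toFinset).card = k at *
  generalize cc e f = c1 at *
  generalize cc e g = c2 at *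
  generalize cc f g = c3 at *
  generalize ct e f g = c4 at *
  have h8 : c4 ≤ 2 := by omega
  have hk : k = 6 + 4 * c4 - 2 * (c1 + c2 + c3) := by omega
  subst hk
  interval_cases c1 <;> interval_cases c2 <;> interval_cases c3 <;> interval_cases c4 <;>
    first
    | (exfalso; omega)
    | (norm_num [h0]; done)
    | (norm_num [h0]; ring)

noncomputable def bI {n : ℕ} (v : Fin n) (e : Sym2 (Fin n)) : ℝ := if v ∈ e then 1 else 0

lemma bI_sq {n : ℕ} (v : Fin n) (e : Sym2 (Fin n)) : bI v e * bI v e = bI v e := by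
  unfold bI; split_ifs <;> norm_num

lemma cc_eq {n : ℕ} (e f : Sym2 (Fin n)) : (cc e f : ℝ) = ∑ v, bI v e * bI v f := by
  have : e.toFinset ∩ f.toFinset = univ.filter fun v => v ∈ e ∧ v ∈ f := by
    ext v; simp
  unfold cc bI
  rw [this, Finset.card_filter]
  push_cast
  refine Finset.sum_congr rfl fun v _ => ?_
  by_cases h1 : v ∈ e <;> by_cases h2 : v ∈ f <;> simp [h1, h2]

lemma ct_eq {n : ℕ} (e f g : Sym2 (Fin n)) :
    (ct e f g : ℝ) = ∑ v, bI v e * bI v f * bI v g := by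
  have : e.toFinset ∩ f.toFinset ∩ g.toFinset = univ.filter fun v => v ∈ e ∧ v ∈ f ∧ v ∈ g := by
    ext v; simp
  unfold ct bI
  rw [this, Finset.card_filter]
  push_cast
  refine Finset.sum_congr rfl fun v _ => ?_
  by_cases h1 : v ∈ e <;> by_cases h2 : v ∈ f <;> by_cases h3 : v ∈ g <;> simp [h1, h2, h3]

/-- sum over the endpoints of an edge -/
lemma sum_bI {n : ℕ} (F : Fin n → ℝ) (i j : Fin n) (h : i ≠ j) :
    ∑ v, bI v s(i, j) * F v = F i + F j := by
  have : ∀ v, bI v s(i, j) * F v = (if v = i then F v else 0) + (if v = j then F v else 0) := by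
    intro v
    unfold bI
    by_cases h1 : v = i
    · subst h1; simp [h]
    · by_cases h2 : v = j
      · subst h2; simp [h1]
      · simp [h1, h2]
  simp [this, Finset.sum_add_distrib]

section
variable {n : ℕ} (G : SimpleGraph (Fin n))

lemma mem_edgeFS (e : Sym2 (Fin n)) : e ∈ edgeFS G ↔ e ∈ G.edgeSet := by
  unfold edgeFS; simp

lemma not_diag (e : Sym2 (Fin n)) (h : e ∈ edgeFS G) : ¬ e.IsDiag :=
  G.not_isDiag_of_mem_edgeSet ((mem_edgeFS G e).1 h)

lemma sum_b (v : Fin n) : ∑ e ∈ edgeFS G, bI v e = deg G v := by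
  classical
  unfold bI deg edgeFS
  rw [← SimpleGraph.card_incidenceFinset_eq_degree, SimpleGraph.incidenceFinset_eq_filter,
    Finset.card_filter]
  push_cast
  rfl

noncomputable def LL (u v : Fin n) : ℝ := ∑ e ∈ edgeFS G, bI u e * bI v e

lemma LL_self (u : Fin n) : LL G u u = deg G u := by
  unfold LL; simp only [bI_sq, sum_b]

lemma LL_ne (u v : Fin n) (h : u ≠ v) : LL G u v = if v ∈ nbrFS G u then 1 else 0 := by
  classical
  have hm : v ∈ nbrFS G u ↔ s(u, v) ∈ edgeFS G := by
    rw [mem_edgeFS]; simp [nbrFS]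
  unfold LL
  have : ∀ e, bI u e * bI v e = if e = s(u, v) then 1 else 0 := by
    intro e
    have := Sym2.mem_and_mem_iff (x := u) (y := v) (z := e) h
    unfold bI
    simp only [← this]
    by_cases a : u ∈ e <;> by_cases b : v ∈ e <;> simp [a, b]
  simp only [this, hm]
  simp

lemma LL_symm (u v : Fin n) : LL G u v = LL G v u := by
  unfold LL; simp only [mul_comm]

lemma not_mem_nbr (u : Fin n) : u ∉ nbrFS G u := by simp [nbrFS]

lemma card_nbr (u : Fin n) : (nbrFS G u).card = deg G u := by
  unfold nbrFS deg; simp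

/-- decomposition of `LL` -/
lemma LL_eq (u v : Fin n) : LL G u v =
    (if v = u then (deg G u : ℝ) else 0) + (if v ∈ nbrFS G u then 1 else 0) := by
  by_cases h : v = u
  · subst h; simp [LL_self, not_mem_nbr]
  · rw [LL_ne G u v (Ne.symm h)]; simp [h]

lemma sum_edge (F : Fin n → ℝ) :
    ∑ e ∈ edgeFS G, ∑ v, bI v e * F v = ∑ v, (deg G v : ℝ) * F v := by
  rw [Finset.sum_comm]
  simp only [← Finset.sum_mul, sum_b]

noncomputable def MM (u v : Fin n) : ℝ := ∑ w, LL G u w * LL G v w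

lemma MM_self (u : Fin n) : MM G u u = (deg G u : ℝ) ^ 2 + deg G u := by
  unfold MM
  have : ∀ w, LL G u w * LL G u w =
      (if w = u then (deg G u : ℝ) ^ 2 else 0) + (if w ∈ nbrFS G u then 1 else 0) := by
    intro w
    rw [LL_eq]
    by_cases h : w = u
    · subst h; simp [not_mem_nbr, sq]
    · simp [h]
  simp only [this, Finset.sum_add_distrib, Finset.sum_ite_eq', Finset.mem_univ, if_true,
    Finset.sum_ite_mem, Finset.univ_inter, Finset.sum_const, card_nbr]
  simp

lemma MM_adj (u v : Fin n) (h : G.Adj u v) :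
    MM G u v = deg G u + deg G v + (nbrFS G u ∩ nbrFS G v).card := by
  unfold MM
  have hne : u ≠ v := h.ne
  have h1 : v ∈ nbrFS G u := by simpa [nbrFS] using h
  have h2 : u ∈ nbrFS G v := by simpa [nbrFS] using h.symm
  have : ∀ w, LL G u w * LL G v w =
      (if w = u then (deg G u : ℝ) else 0) + (if w = v then (deg G v : ℝ) else 0)
        + (if w ∈ nbrFS G u ∩ nbrFS G v then 1 else 0) := by
    intro w
    rw [LL_eq, LL_eq]
    by_cases hu : w = u
    · subst hu; simp [not_mem_nbr, h2, hne]
    · by_cases hv : w = v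
      · subst hv; simp [not_mem_nbr, h1, hu]
      · simp only [hu, hv, Finset.mem_inter]
        by_cases a : w ∈ nbrFS G u <;> by_cases b : w ∈ nbrFS G v <;> simp [a, b]
  simp only [this, Finset.sum_add_distrib, Finset.sum_ite_eq', Finset.mem_univ, if_true,
    Finset.sum_ite_mem, Finset.univ_inter, Finset.sum_const]
  simp

lemma sum_deg : ∑ v, (deg G v : ℝ) = 2 * numEdges G := by
  have h := sum_edge G (fun _ => 1)
  simp only [mul_one] at h
  rw [← h, numEdges]
  rw [Finset.sum_congr rfl (g := fun _ => (2 : ℝ))]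
  · simp [mul_comm]
  · intro e he
    have hd := not_diag G e he
    induction e using Sym2.ind with
    | _ i j =>
      have := sum_bI (fun _ => 1) i j (by simpa using hd)
      simp only [mul_one] at this
      rw [this]; norm_num

noncomputable def WW : ℝ := ∑ e ∈ edgeFS G, (∑ v, bI v e * (deg G v : ℝ)) ^ 2

lemma edgeDegProd_eq : edgeDegProd G =
    (WW G - ∑ v, (deg G v : ℝ) ^ 3) / 2 - (∑ v, (deg G v : ℝ) ^ 2) + numEdges G := by
  have h3 := sum_edge G (fun v => (deg G v : ℝ) ^ 2)
  have h2 := sum_edge G (fun v => (deg G v : ℝ))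
  have e3 : ∑ v, (deg G v : ℝ) ^ 3 = ∑ v, (deg G v : ℝ) * (deg G v : ℝ) ^ 2 :=
    Finset.sum_congr rfl fun v _ => by ring
  have e2 : ∑ v, (deg G v : ℝ) ^ 2 = ∑ v, (deg G v : ℝ) * (deg G v : ℝ) :=
    Finset.sum_congr rfl fun v _ => by ring
  have e1 : numEdges G = ∑ e ∈ edgeFS G, (1 : ℝ) := by simp [numEdges]
  rw [e3, e2, ← h3, ← h2, e1, WW, edgeDegProd, ← Finset.sum_sub_distrib, Finset.sum_div,
    ← Finset.sum_sub_distrib, ← Finset.sum_add_distrib]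
  refine Finset.sum_congr rfl fun e he => ?_
  have hd := not_diag G e he
  induction e using Sym2.ind with
  | _ i j =>
    have hij : i ≠ j := by simpa using hd
    rw [sum_bI _ i j hij, sum_bI _ i j hij, Sym2.lift_mk]
    ring

lemma sum_ccc : ∑ e ∈ edgeFS G, ∑ f ∈ edgeFS G, ∑ g ∈ edgeFS G,
      ((cc e f : ℝ) * cc e g * cc f g) =
    (∑ v, (deg G v : ℝ) ^ 3) + 3 * (∑ v, (deg G v : ℝ) ^ 2) + 2 * edgeCommonNbr G := by
  have hA : ∀ e ∈ edgeFS G, ∑ f ∈ edgeFS G, ∑ g ∈ edgeFS G, ((cc e f : ℝ) * cc e g * cc f g)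
      = ∑ u, bI u e * ∑ v, bI v e * MM G u v := by
    intro e he
    have hg : ∀ f, ∑ g ∈ edgeFS G, ((cc e f : ℝ) * cc e g * cc f g) =
        ∑ u, ∑ v, ∑ w, bI u e * bI v e * (bI u f * bI w f) * LL G v w := by
      intro f
      have h1 : ∑ g ∈ edgeFS G, (cc e g : ℝ) * cc f g =
          ∑ v, ∑ w, bI v e * bI w f * LL G v w := by
        have h0 : ∀ g, (cc e g : ℝ) * cc f g =
            ∑ v, ∑ w, bI v e * bI w f * (bI v g * bI w g) := by
          intro g
          rw [cc_eq, cc_eq, Finset.sum_mul_sum]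
          exact Finset.sum_congr rfl fun v _ => Finset.sum_congr rfl fun w _ => by ring
        simp only [h0]
        rw [Finset.sum_comm]
        refine Finset.sum_congr rfl fun v _ => ?_
        rw [Finset.sum_comm]
        refine Finset.sum_congr rfl fun w _ => ?_
        rw [← Finset.mul_sum]
        rfl
      simp only [mul_assoc (cc e f : ℝ)]
      rw [← Finset.mul_sum, h1, cc_eq, Finset.sum_mul]
      refine Finset.sum_congr rfl fun u _ => ?_
      rw [Finset.mul_sum]
      refine Finset.sum_congr rfl fun v _ => ?_
      rw [Finset.mul_sum]
      refine Finset.sum_congr rfl fun w _ => ?_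
      ring
    simp only [hg, MM]
    rw [Finset.sum_comm]
    refine Finset.sum_congr rfl fun u _ => ?_
    rw [Finset.sum_comm, Finset.mul_sum]
    refine Finset.sum_congr rfl fun v _ => ?_
    rw [Finset.sum_comm, Finset.mul_sum, Finset.mul_sum]
    refine Finset.sum_congr rfl fun w _ => ?_
    rw [← Finset.sum_mul, ← Finset.mul_sum]
    change _ * LL G u w * _ = _
    ring
  rw [Finset.sum_congr rfl hA]
  have h3 := sum_edge G (fun v => (deg G v : ℝ) ^ 2)
  have h2 := sum_edge G (fun v => (deg G v : ℝ))
  have e3 : ∑ v, (deg G v : ℝ) ^ 3 = ∑ v, (deg G v : ℝ) * (deg G v : ℝ) ^ 2 :=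
    Finset.sum_congr rfl fun v _ => by ring
  have e2 : ∑ v, (deg G v : ℝ) ^ 2 = ∑ v, (deg G v : ℝ) * (deg G v : ℝ) :=
    Finset.sum_congr rfl fun v _ => by ring
  rw [e3, e2, ← h3, ← h2, edgeCommonNbr, Finset.mul_sum, Finset.mul_sum,
    ← Finset.sum_add_distrib, ← Finset.sum_add_distrib]
  refine Finset.sum_congr rfl fun e he => ?_
  have hd := not_diag G e he
  have hm := (mem_edgeFS G e).1 he
  induction e using Sym2.ind with
  | _ i j =>
    have hij : i ≠ j := by simpa using hd
    have ha : G.Adj i j := by simpa using hm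
    have hK : MM G j i = MM G i j := by unfold MM; simp only [mul_comm]
    simp only [sum_bI _ i j hij, Sym2.lift_mk]
    rw [hK, MM_self, MM_self, MM_adj G i j ha]
    ring

lemma sum_cc (e : Sym2 (Fin n)) :
    ∑ f ∈ edgeFS G, (cc e f : ℝ) = ∑ v, bI v e * (deg G v : ℝ) := by
  simp only [cc_eq]
  rw [Finset.sum_comm]
  simp only [← Finset.mul_sum, sum_b]

lemma cc_comm (e f : Sym2 (Fin n)) : cc e f = cc f e := by
  unfold cc; rw [Finset.inter_comm]

lemma sum_cc2 : ∑ e ∈ edgeFS G, ∑ f ∈ edgeFS G, (cc e f : ℝ) = ∑ v, (deg G v : ℝ) ^ 2 := by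
  simp only [sum_cc, sum_edge, sq]

lemma sum_s (e : Sym2 (Fin n)) (he : e ∈ edgeFS G) (F : Sym2 (Fin n) → ℝ) :
    ∑ f ∈ edgeFS G, sI e f * F f = F e := by
  simp [sI, he]

lemma sum_ct : ∑ e ∈ edgeFS G, ∑ f ∈ edgeFS G, ∑ g ∈ edgeFS G, (ct e f g : ℝ) =
    ∑ v, (deg G v : ℝ) ^ 3 := by
  have : ∀ e f, ∑ g ∈ edgeFS G, (ct e f g : ℝ) = ∑ v, bI v e * bI v f * deg G v := by
    intro e f
    simp only [ct_eq]
    rw [Finset.sum_comm]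
    simp only [← Finset.mul_sum, sum_b]
  simp only [this]
  have : ∀ e, ∑ f ∈ edgeFS G, ∑ v, bI v e * bI v f * deg G v
      = ∑ v, bI v e * ((deg G v : ℝ) * deg G v) := by
    intro e
    rw [Finset.sum_comm]
    simp only [← Finset.sum_mul, ← Finset.mul_sum, sum_b, mul_assoc]
  simp only [this, sum_edge]
  exact Finset.sum_congr rfl fun v _ => by ring

/-- Sum of the pair formula over pairs of edges. -/
lemma sum_pair (a b c : ℝ) : ∑ e ∈ edgeFS G, ∑ f ∈ edgeFS G,
      (a + b * cc e f + c * sI e f) =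
    a * numEdges G ^ 2 + b * (∑ v, (deg G v : ℝ) ^ 2) + c * numEdges G := by
  have h : ∀ e ∈ edgeFS G, ∑ f ∈ edgeFS G, (a + b * cc e f + c * sI e f) =
      a * numEdges G + b * (∑ f ∈ edgeFS G, (cc e f : ℝ)) + c := by
    intro e he
    have := sum_s G e he (fun _ => 1)
    simp only [mul_one] at this
    simp only [Finset.sum_add_distrib, ← Finset.mul_sum, this, Finset.sum_const, numEdges]
    simp [mul_comm]
  rw [Finset.sum_congr rfl h]
  simp only [Finset.sum_add_distrib, ← Finset.mul_sum, sum_cc2, Finset.sum_const, numEdges]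
  simp; ring

lemma sum_triple (a0 a1 a2 a3 a4 a5 a6 a7 : ℝ) :
    ∑ e ∈ edgeFS G, ∑ f ∈ edgeFS G, ∑ g ∈ edgeFS G,
      (a0 + a1 * ((cc e f : ℝ) + cc e g + cc f g)
      + a2 * (sI e f + sI e g + sI f g)
      + a4 * ct e f g
      + a5 * ((cc e f : ℝ) * cc e g + cc e f * cc f g + cc e g * cc f g)
      + a6 * ((cc e f : ℝ) * cc e g * cc f g)
      + a7 * (sI e f * cc e g + sI e g * cc e f + sI f g * cc e f)
      + a3 * (sI e f * sI f g)) =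
    a0 * numEdges G ^ 3 + a1 * (3 * numEdges G * ∑ v, (deg G v : ℝ) ^ 2)
      + a2 * (3 * numEdges G ^ 2) + a4 * (∑ v, (deg G v : ℝ) ^ 3)
      + a5 * (3 * WW G)
      + a6 * ((∑ v, (deg G v : ℝ) ^ 3) + 3 * (∑ v, (deg G v : ℝ) ^ 2) + 2 * edgeCommonNbr G)
      + a7 * (3 * ∑ v, (deg G v : ℝ) ^ 2) + a3 * numEdges G := by
  rw [← sum_ccc, ← sum_ct, ← sum_cc2]
  have hm : ∑ e ∈ edgeFS G, (1 : ℝ) = numEdges G := by simp [numEdges]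
  have hconst : ∀ x : ℝ, ∑ e ∈ edgeFS G, x = numEdges G * x := by intro x; simp [numEdges]
  have hs : ∀ e ∈ edgeFS G, ∑ f ∈ edgeFS G, sI e f = 1 := by
    intro e he
    have := sum_s G e he (fun _ => 1)
    simpa only [mul_one] using this
  -- pieces
  have w1 : ∑ e ∈ edgeFS G, ∑ f ∈ edgeFS G, ∑ g ∈ edgeFS G, (cc e f : ℝ) * cc e g = WW G := by
    simp only [← Finset.mul_sum, ← Finset.sum_mul, sum_cc, WW, sq]
  have w2 : ∑ e ∈ edgeFS G, ∑ f ∈ edgeFS G, ∑ g ∈ edgeFS G, (cc e f : ℝ) * cc f g = WW G := by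
    rw [Finset.sum_comm, ← w1]
    simp only [cc_comm]
  have w3 : ∑ e ∈ edgeFS G, ∑ f ∈ edgeFS G, ∑ g ∈ edgeFS G, (cc e g : ℝ) * cc f g = WW G := by
    rw [← w2]
    refine Finset.sum_congr rfl fun e _ => ?_
    rw [Finset.sum_comm]
    refine Finset.sum_congr rfl fun e _ => Finset.sum_congr rfl fun e _ => ?_
    rw [cc_comm e]
  have s1 : ∑ e ∈ edgeFS G, ∑ f ∈ edgeFS G, sI e f = numEdges G := by
    rw [Finset.sum_congr rfl hs, hm]
  have s2 : ∑ e ∈ edgeFS G, ∑ f ∈ edgeFS G, ∑ g ∈ edgeFS G, sI e f * cc e g =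
      ∑ e ∈ edgeFS G, ∑ f ∈ edgeFS G, (cc e f : ℝ) := by
    refine Finset.sum_congr rfl fun e he => ?_
    simp only [← Finset.mul_sum]
    exact sum_s G e he (fun _ => ∑ f ∈ edgeFS G, (cc e f : ℝ))
  have s3 : ∑ e ∈ edgeFS G, ∑ f ∈ edgeFS G, ∑ g ∈ edgeFS G, sI e g * cc e f =
      ∑ e ∈ edgeFS G, ∑ f ∈ edgeFS G, (cc e f : ℝ) := by
    refine Finset.sum_congr rfl fun e he => Finset.sum_congr rfl fun f hf => ?_
    exact sum_s G e he (fun _ => (cc e f : ℝ))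
  have s4 : ∑ e ∈ edgeFS G, ∑ f ∈ edgeFS G, ∑ g ∈ edgeFS G, sI f g * cc e f =
      ∑ e ∈ edgeFS G, ∑ f ∈ edgeFS G, (cc e f : ℝ) := by
    refine Finset.sum_congr rfl fun e he => Finset.sum_congr rfl fun f hf => ?_
    exact sum_s G f hf (fun _ => (cc e f : ℝ))
  have s5 : ∑ e ∈ edgeFS G, ∑ f ∈ edgeFS G, ∑ g ∈ edgeFS G, sI e f * sI f g = numEdges G := by
    rw [← s1]
    refine Finset.sum_congr rfl fun e he => Finset.sum_congr rfl fun f hf => ?_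
    rw [← Finset.mul_sum, hs f hf, mul_one]
  simp only [Finset.sum_add_distrib, ← Finset.mul_sum, hconst] at *
  simp only [w1, w2, w3, s1, s2, s3, s4, s5]
  ring
end

noncomputable def xE {n : ℕ} (t : ℕ) (π : Equiv.Perm (Fin n)) (e : Sym2 (Fin n)) : ℝ :=
  ∏ v ∈ e.toFinset, ys n t (π v)

lemma crossInd_eq {n : ℕ} (t : ℕ) (π : Equiv.Perm (Fin n)) (e : Sym2 (Fin n))
    (he : ¬ e.IsDiag) : crossInd (gOne n t ⇑π) e = (1 - xE t π e) / 2 := by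
  induction e using Sym2.ind with
  | _ i j =>
    have hij : i ≠ j := by simpa using he
    unfold xE crossInd
    rw [Sym2.toFinset_mk_eq, Finset.prod_pair hij, Sym2.lift_mk]
    unfold gOne ys
    by_cases h1 : t < (π i : ℕ) + 1 <;> by_cases h2 : t < (π j : ℕ) + 1 <;>
      simp only [h1, h2] <;> norm_num

lemma Rone_eq {n : ℕ} (G : SimpleGraph (Fin n)) (t : ℕ) (π : Equiv.Perm (Fin n)) :
    Rone G t π = (numEdges G - ∑ e ∈ edgeFS G, xE t π e) / 2 := by
  unfold Rone RoneF numEdges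
  rw [Finset.sum_congr rfl fun e he => crossInd_eq t π e (not_diag G e he), ← Finset.sum_div,
    Finset.sum_sub_distrib]
  simp

lemma permExp_sum {n : ℕ} {ι : Type*} (s : Finset ι) (X : ι → Equiv.Perm (Fin n) → ℝ) :
    permExp n (fun π => ∑ i ∈ s, X i π) = ∑ i ∈ s, permExp n (X i) := by
  unfold permExp
  rw [Finset.sum_comm, Finset.sum_div]

lemma third_expand {n : ℕ} (G : SimpleGraph (Fin n)) (t : ℕ) :
    permExp n (fun π => (Rone G t π) ^ 3) =
      (numEdges G ^ 3
        - 3 * numEdges G ^ 2 * (∑ e ∈ edgeFS G, eS n t e.toFinset)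
        + 3 * numEdges G * (∑ e ∈ edgeFS G, ∑ f ∈ edgeFS G,
            eS n t (symmDiff e.toFinset f.toFinset))
        - ∑ e ∈ edgeFS G, ∑ f ∈ edgeFS G, ∑ g ∈ edgeFS G,
            eS n t (symmDiff (symmDiff e.toFinset f.toFinset) g.toFinset)) / 8 := by
  have q1 : ∑ e ∈ edgeFS G, eS n t e.toFinset =
      permExp n (fun π => ∑ e ∈ edgeFS G, xE t π e) := by
    rw [permExp_sum]; rfl
  have q2 : ∑ e ∈ edgeFS G, ∑ f ∈ edgeFS G, eS n t (symmDiff e.toFinset f.toFinset) =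
      permExp n (fun π => (∑ e ∈ edgeFS G, xE t π e) ^ 2) := by
    simp only [sq, Finset.sum_mul_sum]
    rw [permExp_sum]
    refine Finset.sum_congr rfl fun e _ => ?_
    rw [permExp_sum]
    refine Finset.sum_congr rfl fun f _ => ?_
    unfold eS xE
    congr 1; funext π
    rw [prod_symm (fun v => ys n t (π v)) (fun i => ys_sq n t _)]
  have q3 : ∑ e ∈ edgeFS G, ∑ f ∈ edgeFS G, ∑ g ∈ edgeFS G,
      eS n t (symmDiff (symmDiff e.toFinset f.toFinset) g.toFinset) =
      permExp n (fun π => (∑ e ∈ edgeFS G, xE t π e) ^ 3) := by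
    have h : ∀ a : ℝ, a ^ 3 = a * a * a := fun a => by ring
    simp only [h, Finset.sum_mul_sum]
    simp only [Finset.sum_mul]
    rw [permExp_sum]
    refine Finset.sum_congr rfl fun e _ => ?_
    rw [permExp_sum]
    refine Finset.sum_congr rfl fun f _ => ?_
    rw [permExp_sum]
    refine Finset.sum_congr rfl fun g _ => ?_
    unfold eS xE
    congr 1; funext π
    rw [prod_symm (fun v => ys n t (π v)) (fun i => ys_sq n t _),
      prod_symm (fun v => ys n t (π v)) (fun i => ys_sq n t _), symmDiff_right_comm]
  rw [q1, q2, q3]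
  have hf : (n.factorial : ℝ) ≠ 0 := by positivity
  have h0 : numEdges G ^ 3 = permExp n (fun _ => numEdges G ^ 3) := by
    simp [permExp, Fintype.card_perm, hf]
  rw [h0]
  simp only [Rone_eq]
  unfold permExp
  simp only [← mul_div_assoc, ← add_div, ← sub_div, Finset.mul_sum (univ : Finset (Equiv.Perm (Fin n))),
    ← Finset.sum_add_distrib, ← Finset.sum_sub_distrib]
  rw [div_right_comm]
  congr 1
  rw [Finset.sum_div]
  refine Finset.sum_congr rfl fun π _ => ?_
  ring

/-- Lemma 4: explicit expression for `E[R_G(t)³]` under the permutation null. -/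
theorem third_moment_R_one (n : ℕ) (hn : 6 ≤ n) (G : SimpleGraph (Fin n))
    (t : ℕ) (ht1 : 1 ≤ t) (ht2 : t ≤ n - 1) :
    permExp n (fun π => (Rone G t π) ^ 3) =
      p1 n t * numEdges G
        + 3 / 2 * p1 n t * ∑ i : Fin n, (deg G i : ℝ) * ((deg G i : ℝ) - 1)
        + 3 * p2 n t * (numEdges G * (numEdges G - 1)
            + 1 / 2 * ∑ i : Fin n,
                (deg G i : ℝ) * ((deg G i : ℝ) - 1) * (numEdges G - (deg G i : ℝ)))
        - 3 * p2 n t * ((∑ i : Fin n, (deg G i : ℝ) * ((deg G i : ℝ) - 1)) + edgeDegProd G)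
        + p3 n t * ∑ i : Fin n, (deg G i : ℝ) * ((deg G i : ℝ) - 1) * ((deg G i : ℝ) - 2)
        + p4 n t * (numEdges G * (numEdges G - 1) * (numEdges G - 2) + 6 * edgeDegProd G)
        - 2 * p4 n t * edgeCommonNbr G
        - p4 n t * ∑ i : Fin n,
            (deg G i : ℝ) * ((deg G i : ℝ) - 1) * (3 * numEdges G - 2 * (deg G i : ℝ) - 2) := by
  have htn : t ≤ n := by omega
  obtain ⟨e, he⟩ := exists_eK n t
  have z0 := eK_zero n t e he
  have r0 := eK_rec n t htn e he 0 (by omega)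
  have r1 := eK_rec n t htn e he 1 (by omega)
  have r2 := eK_rec n t htn e he 2 (by omega)
  have r3 := eK_rec n t htn e he 3 (by omega)
  have r4 := eK_rec n t htn e he 4 (by omega)
  have r5 := eK_rec n t htn e he 5 (by omega)
  norm_num at r0 r1 r2 r3 r4 r5
  rw [third_expand]
  simp only [he]
  have k1 : ∑ f ∈ edgeFS G, e f.toFinset.card = numEdges G * e 2 := by
    rw [Finset.sum_congr rfl fun f hf => by
      rw [Sym2.card_toFinset_of_not_isDiag f (not_diag G f hf)]]
    simp [numEdges]
  have k2 := (Finset.sum_congr rfl fun f hf => Finset.sum_congr rfl fun g hg =>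
      pair_formula e z0 f g (not_diag G f hf) (not_diag G g hg)).trans (sum_pair G _ _ _)
  have k3 := (Finset.sum_congr rfl fun f hf => Finset.sum_congr rfl fun g hg =>
      Finset.sum_congr rfl fun h hh =>
      triple_formula e z0 f g h (not_diag G f hf) (not_diag G g hg) (not_diag G h hh)).trans
      (sum_triple G _ _ _ _ _ _ _ _)
  rw [k1, k2, k3, edgeDegProd_eq]
  have d1 := sum_deg G
  have x1 : ∑ i : Fin n, (deg G i : ℝ) * ((deg G i : ℝ) - 1) =
      (∑ v, (deg G v : ℝ) ^ 2) - 2 * numEdges G := by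
    rw [← d1, ← Finset.sum_sub_distrib]
    exact Finset.sum_congr rfl fun i _ => by ring
  have x2 : ∑ i : Fin n, (deg G i : ℝ) * ((deg G i : ℝ) - 1) * (numEdges G - (deg G i : ℝ)) =
      (numEdges G + 1) * (∑ v, (deg G v : ℝ) ^ 2) - (∑ v, (deg G v : ℝ) ^ 3)
        - numEdges G * (2 * numEdges G) := by
    rw [← d1, Finset.mul_sum, Finset.mul_sum, ← Finset.sum_sub_distrib, ← Finset.sum_sub_distrib]
    exact Finset.sum_congr rfl fun i _ => by ring
  have x3 : ∑ i : Fin n, (deg G i : ℝ) * ((deg G i : ℝ) - 1) * ((deg G i : ℝ) - 2) =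
      (∑ v, (deg G v : ℝ) ^ 3) - 3 * (∑ v, (deg G v : ℝ) ^ 2) + 2 * (2 * numEdges G) := by
    rw [← d1, Finset.mul_sum, Finset.mul_sum, ← Finset.sum_sub_distrib, ← Finset.sum_add_distrib]
    exact Finset.sum_congr rfl fun i _ => by ring
  have x4 : ∑ i : Fin n,
      (deg G i : ℝ) * ((deg G i : ℝ) - 1) * (3 * numEdges G - 2 * (deg G i : ℝ) - 2) =
      3 * numEdges G * (∑ v, (deg G v : ℝ) ^ 2) - 2 * (∑ v, (deg G v : ℝ) ^ 3)
        - (3 * numEdges G - 2) * (2 * numEdges G) := by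
    rw [← d1, Finset.mul_sum, Finset.mul_sum, Finset.mul_sum, ← Finset.sum_sub_distrib,
      ← Finset.sum_sub_distrib]
    exact Finset.sum_congr rfl fun i _ => by ring
  rw [x1, x2, x3, x4]
  clear k1 k2 k3 x1 x2 x3 x4 d1 he
  generalize (∑ v, (deg G v : ℝ) ^ 2) = D2
  generalize (∑ v, (deg G v : ℝ) ^ 3) = D3
  generalize WW G = W
  generalize edgeCommonNbr G = K
  generalize numEdges G = m
  have hnr : (6 : ℝ) ≤ n := by exact_mod_cast hn
  unfold p1 p2 p3 p4
  generalize (n : ℝ) = N at *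
  generalize (t : ℝ) = T at *
  have n0 : N ≠ 0 := by linarith
  have n1 : N - 1 ≠ 0 := by intro h; linarith
  have n2 : N - 2 ≠ 0 := by intro h; linarith
  have n3 : N - 3 ≠ 0 := by intro h; linarith
  have n4 : N - 4 ≠ 0 := by intro h; linarith
  have n5 : N - 5 ≠ 0 := by intro h; linarith
  rw [z0] at r0 r1
  have v1 : e 1 = (2 * T - N) / N := by
    rw [eq_div_iff n0]; linarith
  have v2 : e 2 = 1 - 2 * (2 * T * (N - T) / (N * (N - 1))) := by
    rw [v1] at r1
    have : e 2 = ((2 * T - N) * ((2 * T - N) / N) - 1) / (N - 1) := by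
      rw [eq_div_iff n1]; linarith
    rw [this]; field_simp; ring
  have v3 : e 3 = ((2 * T - N) * e 2 - 2 * e 1) / (N - 2) := by
    rw [eq_div_iff n2]; linarith
  have v4 : e 4 = ((2 * T - N) * e 3 - 3 * e 2) / (N - 3) := by
    rw [eq_div_iff n3]; linarith
  have v5 : e 5 = ((2 * T - N) * e 4 - 4 * e 3) / (N - 4) := by
    rw [eq_div_iff n4]; linarith
  have v6 : e 6 = ((2 * T - N) * e 5 - 5 * e 4) / (N - 5) := by
    rw [eq_div_iff n5]; linarith
  set P1 := 2 * T * (N - T) / (N * (N - 1)) with hP1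
  set P2 := 4 * T * (T - 1) * (N - T) * (N - T - 1) / (N * (N - 1) * (N - 2) * (N - 3)) with hP2
  have w4 : e 4 = 1 - 4 * P1 + 4 * P2 := by
    rw [v4, v3, v2, v1, hP1, hP2]; field_simp; ring
  set P4 := 8 * T * (T - 1) * (T - 2) * (N - T) * (N - T - 1) * (N - T - 2) /
    (N * (N - 1) * (N - 2) * (N - 3) * (N - 4) * (N - 5)) with hP4
  have w6 : e 6 = 1 - 6 * P1 + 12 * P2 - 8 * P4 := by
    rw [v6, v5, w4, v3, v2, v1, hP1, hP2, hP4]; field_simp; ring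
  have w3 : T * (N - T) * ((N - T - 1) * (N - T - 2) + (T - 1) * (T - 2)) /
      (N * (N - 1) * (N - 2) * (N - 3)) = P1 / 2 - P2 / 2 := by
    rw [hP1, hP2]; field_simp; ring
  rw [w3, w6, w4, v2]
  ring

end GraphCP
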